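/- (Lemma 1, monotonicity of the optimal value function with respect to AoI states, in Bellman fixed-point form.) Assume each cost function g_n is bounded, positive, and nondecreasing. Then the Bellman optimality operator T, acting on bounded real-valued functions on the state space by (T V)(s) = r(s) + γ · max over feasible actions a of ∑_{s⁺} P(s⁺ | s, a) V(s⁺), has a unique bounded fixed point V* (i.e., V* = T V*), and V* is AoI-antitone: for every device index n, every channel matrix H, and every pair of AoI vectors τ, τ'_(n) that agree in all coordinates except that τ'_n ≥ τ_n, one has V*(τ'_(n), H) ≤ V*(τ, H). -/

import Mathlib

/-- AoI (Age-of-Information) state vector: each device's AoI is a positive natural. -/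
abbrev AoI (N : ℕ) := Fin N → ℕ+

/-- Channel state matrix: entry `(n, m)` is the (quantized) state of the channel
between device `n` and the destination on sub-channel `m`, one of `ĥ` levels. -/
abbrev Chan (N M hh : ℕ) := Fin N → Fin M → Fin hh

/-- A state of the MDP: a pair `s = (τ, H)`. -/
abbrev MDPState (N M hh : ℕ) := AoI N × Chan N M hh

/-- An action: `a n = some m` means device `n` transmits on channel `m`;
`a n = none` means device `n` is idle (`a_n = 0`). A device uses at most
one channel automatically since `a` is a function. -/
abbrev SchedAction (N M : ℕ) := Fin N → Option (Fin M)

/-- Feasibility: every channel `m` is used by exactly one device. -/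
def Feasible {N M : ℕ} (a : SchedAction N M) : Prop :=
  ∀ m : Fin M, ∃! n : Fin N, a n = some m

/-- Probability that device `n`'s AoI transition is the one encoded by the
success flags `b` (`b n = true` iff device `n`'s packet is received):
if `a n = some m`, success has probability `1 - p n m (H n m)` and failure
probability `p n m (H n m)`; an idle device surely fails. -/
def devProb {N M hh : ℕ} (p : Fin N → Fin M → Fin hh → ℝ)
    (H : Chan N M hh) (a : SchedAction N M) (b : Fin N → Bool) (n : Fin N) : ℝ :=
  match a n with
  | some m => if b n then 1 - p n m (H n m) else p n m (H n m)
  | none => if b n then 0 else 1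

/-- The next AoI vector: `1` upon reception, `τ n + 1` otherwise. -/
def nextAoI {N : ℕ} (τ : AoI N) (b : Fin N → Bool) : AoI N :=
  fun n => if b n then 1 else τ n + 1

/-- The expected next-state value `∑_{s⁺} P(s⁺ | s, a) V(s⁺)`, where
`P((τ⁺,H⁺) | (τ,H), a) = (∏_n Pr(τ_n⁺ | τ_n, H, a_n)) · q(H⁺)`. -/
noncomputable def expNext {N M hh : ℕ} (p : Fin N → Fin M → Fin hh → ℝ)
    (q : Chan N M hh → ℝ) (V : MDPState N M hh → ℝ)
    (s : MDPState N M hh) (a : SchedAction N M) : ℝ :=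
  ∑ Hp : Chan N M hh, ∑ b : Fin N → Bool,
    q Hp * (∏ n, devProb p s.2 a b n) * V (nextAoI s.1 b, Hp)

/-- `Q(s,a) = r(s) + γ ∑_{s⁺} P(s⁺ | s, a) V(s⁺)` with reward
`r(s) = -∑_n g_n(τ_n)`. -/
noncomputable def Qval {N M hh : ℕ} (p : Fin N → Fin M → Fin hh → ℝ)
    (q : Chan N M hh → ℝ) (g : Fin N → ℕ+ → ℝ) (γ : ℝ)
    (V : MDPState N M hh → ℝ) (s : MDPState N M hh) (a : SchedAction N M) : ℝ :=
  (- ∑ n, g n (s.1 n)) + γ * expNext p q V s a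

/-- `V` is AoI-antitone: increasing a single AoI coordinate (keeping everything
else fixed) cannot increase the value. -/
def AoIAntitone {N M hh : ℕ} (V : MDPState N M hh → ℝ) : Prop :=
  ∀ (n : Fin N) (H : Chan N M hh) (τ τ' : AoI N),
    (∀ k, k ≠ n → τ' k = τ k) → τ n ≤ τ' n → V (τ', H) ≤ V (τ, H)

/-- The Bellman optimality operator: `(T V)(s) = r(s) + γ · max_{a feasible} ∑_{s⁺} P(s⁺|s,a) V(s⁺)`.
Since the set of feasible actions is finite and (as `M < N`) nonempty, the maximum
is the supremum of the corresponding (finite, nonempty) set of expected values. -/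
noncomputable def bellmanT {N M hh : ℕ} (p : Fin N → Fin M → Fin hh → ℝ)
    (q : Chan N M hh → ℝ) (g : Fin N → ℕ+ → ℝ) (γ : ℝ)
    (V : MDPState N M hh → ℝ) : MDPState N M hh → ℝ := fun s =>
  (- ∑ n, g n (s.1 n)) +
    γ * sSup ((fun a => expNext p q V s a) '' {a : SchedAction N M | Feasible a})

open Filter Topology

/-- A contraction in the sup-distance on real-valued functions has a unique bounded fixed
point, and the iterates starting from `0` converge to it pointwise. -/
theorem exists_unique_bounded_fixedPoint {α : Type*} (T : (α → ℝ) → α → ℝ) {γ B : ℝ}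
    (hγ0 : 0 ≤ γ) (hγ1 : γ < 1) (hB : ∀ s, |T 0 s| ≤ B)
    (hT : ∀ V W C, (∀ s, |V s - W s| ≤ C) → ∀ s, |T V s - T W s| ≤ γ * C) :
    ∃ V : α → ℝ, (∃ C, ∀ s, |V s| ≤ C) ∧ T V = V ∧
      (∀ W : α → ℝ, (∃ C, ∀ s, |W s| ≤ C) → T W = W → W = V) ∧
      ∀ s, Tendsto (fun k => T^[k] 0 s) atTop (𝓝 (V s)) := by
  have hgeom : Tendsto (fun k : ℕ => γ ^ k) atTop (𝓝 0) :=
    tendsto_pow_atTop_nhds_zero_of_lt_one hγ0 hγ1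
  have hstep : ∀ k s, dist (T^[k] 0 s) (T^[k + 1] 0 s) ≤ B * γ ^ k := by
    intro k
    induction k with
    | zero =>
      intro s
      simpa [Real.dist_eq] using hB s
    | succ k ih =>
      intro s
      rw [Function.iterate_succ_apply', Function.iterate_succ_apply' T (k + 1), Real.dist_eq]
      exact (hT _ _ _ (fun s => by simpa only [Real.dist_eq] using ih s) s).trans_eq (by ring)
  choose V hV using fun s =>
    cauchySeq_tendsto_of_complete (cauchySeq_of_le_geometric γ B hγ1 (fun k => hstep k s))
  have hdist : ∀ k s, |T^[k] 0 s - V s| ≤ B * γ ^ k / (1 - γ) := fun k s => by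
    simpa only [Real.dist_eq] using
      dist_le_of_le_geometric_of_tendsto γ B hγ1 (fun k => hstep k s) (hV s) k
  have hbdd : ∀ s, |V s| ≤ B / (1 - γ) := fun s => by simpa using hdist 0 s
  have hfix : T V = V := by
    funext s
    refine tendsto_nhds_unique ?_ ((tendsto_add_atTop_iff_nat 1).2 (hV s))
    rw [tendsto_iff_dist_tendsto_zero]
    refine squeeze_zero (g := fun k => γ * (B * γ ^ k / (1 - γ)))
      (fun _ => dist_nonneg) (fun k => ?_) ?_
    · rw [Function.iterate_succ_apply', Real.dist_eq]
      exact hT _ _ _ (hdist k) s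
    · simpa using ((hgeom.const_mul B).div_const (1 - γ)).const_mul γ
  refine ⟨V, ⟨_, hbdd⟩, hfix, ?_, hV⟩
  rintro W ⟨C, hC⟩ hW
  have hclose : ∀ k : ℕ, ∀ s, |W s - V s| ≤ γ ^ k * (C + B / (1 - γ)) := by
    intro k
    induction k with
    | zero =>
      intro s
      simpa using (abs_sub _ _).trans (add_le_add (hC s) (hbdd s))
    | succ k ih =>
      intro s
      have h := hT _ _ _ ih s
      rw [hW, hfix] at h
      exact h.trans_eq (by ring)
  funext s
  have hlim : Tendsto (fun k : ℕ => γ ^ k * (C + B / (1 - γ))) atTop (𝓝 0) := by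
    simpa using hgeom.mul_const (C + B / (1 - γ))
  have h0 : |W s - V s| ≤ 0 := ge_of_tendsto' hlim fun k => hclose k s
  exact sub_eq_zero.1 (abs_nonpos_iff.1 h0)

theorem Set.Finite.csSup_image_le_csSup_image_add {ι : Type*} {S : Set ι} (hfin : S.Finite)
    (hne : S.Nonempty) {f₁ f₂ : ι → ℝ} {C : ℝ} (h : ∀ i ∈ S, f₁ i ≤ f₂ i + C) :
    sSup (f₁ '' S) ≤ sSup (f₂ '' S) + C := by
  refine csSup_le (hne.image _) ?_
  rintro _ ⟨i, hi, rfl⟩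
  have hle : f₂ i ≤ sSup (f₂ '' S) :=
    le_csSup (hfin.image f₂).bddAbove (Set.mem_image_of_mem f₂ hi)
  linarith [h i hi]

section Scheduling

variable {N M hh : ℕ} {p : Fin N → Fin M → Fin hh → ℝ} {q : Chan N M hh → ℝ}

theorem exists_feasible (hMN : M < N) : {a : SchedAction N M | Feasible a}.Nonempty := by
  refine ⟨fun n => if h : (n : ℕ) < M then some ⟨n, h⟩ else none,
    fun m => ⟨⟨m, m.2.trans hMN⟩, by simp, fun n hn => ?_⟩⟩
  by_cases h : (n : ℕ) < M
  · simp only [h, dif_pos, Option.some.injEq] at hn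
    simp [← hn]
  · simp [h] at hn

theorem devProb_nonneg (hp0 : ∀ n m h, 0 ≤ p n m h) (hp1 : ∀ n m h, p n m h ≤ 1)
    (H : Chan N M hh) (a : SchedAction N M) (b : Fin N → Bool) (n : Fin N) :
    0 ≤ devProb p H a b n := by
  unfold devProb
  split <;> split
  · exact sub_nonneg.2 (hp1 _ _ _)
  · exact hp0 _ _ _
  · exact le_rfl
  · exact zero_le_one

theorem sum_prod_devProb (H : Chan N M hh) (a : SchedAction N M) :
    ∑ b : Fin N → Bool, ∏ n, devProb p H a b n = 1 := by
  have h := Finset.prod_univ_sum (fun _ : Fin N => (Finset.univ : Finset Bool))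
    (fun n x => devProb p H a (fun _ => x) n)
  rw [Fintype.piFinset_univ] at h
  refine (h.symm.trans (Finset.prod_eq_one fun n _ => ?_))
  rw [Fintype.sum_bool]
  unfold devProb
  cases a n <;> simp

/-- One step of the chain is a monotone averaging operator. -/
theorem expNext_le_expNext_add (hp0 : ∀ n m h, 0 ≤ p n m h) (hp1 : ∀ n m h, p n m h ≤ 1)
    (hq0 : ∀ H, 0 ≤ q H) (hq1 : ∑ H : Chan N M hh, q H = 1)
    {V W : MDPState N M hh → ℝ} {τ τ' : AoI N} {H : Chan N M hh} {C : ℝ}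
    (h : ∀ b H', V (nextAoI τ b, H') ≤ W (nextAoI τ' b, H') + C) (a : SchedAction N M) :
    expNext p q V (τ, H) a ≤ expNext p q W (τ', H) a + C := by
  have hmass : ∑ H' : Chan N M hh, ∑ b : Fin N → Bool, q H' * (∏ n, devProb p H a b n) * C = C := by
    simp_rw [← Finset.sum_mul, ← Finset.mul_sum, sum_prod_devProb, mul_one, hq1, one_mul]
  calc expNext p q V (τ, H) a
      ≤ ∑ H' : Chan N M hh, ∑ b : Fin N → Bool,
          q H' * (∏ n, devProb p H a b n) * (W (nextAoI τ' b, H') + C) :=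
        Finset.sum_le_sum fun H' _ => Finset.sum_le_sum fun b _ =>
          mul_le_mul_of_nonneg_left (h b H')
            (mul_nonneg (hq0 H') (Finset.prod_nonneg fun n _ => devProb_nonneg hp0 hp1 H a b n))
    _ = expNext p q W (τ', H) a + C := by
        simp_rw [mul_add, Finset.sum_add_distrib, hmass]
        rfl

theorem bellmanT_sub_le (hMN : M < N) (hp0 : ∀ n m h, 0 ≤ p n m h)
    (hp1 : ∀ n m h, p n m h ≤ 1) (hq0 : ∀ H, 0 ≤ q H) (hq1 : ∑ H : Chan N M hh, q H = 1)
    (g : Fin N → ℕ+ → ℝ) {γ : ℝ} (hγ0 : 0 ≤ γ) {V W : MDPState N M hh → ℝ} {C : ℝ}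
    (h : ∀ s, |V s - W s| ≤ C) (s : MDPState N M hh) :
    bellmanT p q g γ V s - bellmanT p q g γ W s ≤ γ * C := by
  have hsup : sSup ((fun a => expNext p q V s a) '' {a : SchedAction N M | Feasible a}) ≤
      sSup ((fun a => expNext p q W s a) '' {a : SchedAction N M | Feasible a}) + C :=
    (Set.toFinite _).csSup_image_le_csSup_image_add (exists_feasible hMN) fun a _ =>
      expNext_le_expNext_add hp0 hp1 hq0 hq1
        (fun b H' => by linarith [(abs_le.1 (h (nextAoI s.1 b, H'))).2]) a
  have := mul_le_mul_of_nonneg_left hsup hγ0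
  unfold bellmanT
  linarith

theorem abs_bellmanT_zero_le {g : Fin N → ℕ+ → ℝ} (hgpos : ∀ n τ, 0 < g n τ) {G : Fin N → ℝ}
    (hG : ∀ n τ, g n τ ≤ G n) (hMN : M < N) (γ : ℝ) (s : MDPState N M hh) :
    |bellmanT p q g γ 0 s| ≤ ∑ n, G n := by
  have hzero : (fun a => expNext p q 0 s a) = fun _ => 0 := by
    funext a
    simp [expNext]
  rw [bellmanT, hzero, (exists_feasible hMN).image_const, csSup_singleton, mul_zero, add_zero,
    abs_neg, abs_of_nonneg (Finset.sum_nonneg fun n _ => (hgpos n _).le)]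
  exact Finset.sum_le_sum fun n _ => hG n _

theorem AoIAntitone.bellmanT (hMN : M < N) (hp0 : ∀ n m h, 0 ≤ p n m h)
    (hp1 : ∀ n m h, p n m h ≤ 1) (hq0 : ∀ H, 0 ≤ q H) (hq1 : ∑ H : Chan N M hh, q H = 1)
    {g : Fin N → ℕ+ → ℝ} (hgmono : ∀ n, Monotone (g n)) {γ : ℝ} (hγ0 : 0 ≤ γ)
    {V : MDPState N M hh → ℝ} (hV : AoIAntitone V) : AoIAntitone (bellmanT p q g γ V) := by
  intro n H τ τ' hne hle
  have hnext : ∀ b H', V (nextAoI τ' b, H') ≤ V (nextAoI τ b, H') + 0 := by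
    intro b H'
    rw [add_zero]
    refine hV n H' _ _ (fun k hk => ?_) ?_
    · simp only [nextAoI, hne k hk]
    · simp only [nextAoI]
      split
      · exact le_rfl
      · exact add_le_add_left hle 1
  have hsup : sSup ((fun a => expNext p q V (τ', H) a) '' {a : SchedAction N M | Feasible a}) ≤
      sSup ((fun a => expNext p q V (τ, H) a) '' {a : SchedAction N M | Feasible a}) + 0 :=
    (Set.toFinite _).csSup_image_le_csSup_image_add (exists_feasible hMN) fun a _ =>
      expNext_le_expNext_add hp0 hp1 hq0 hq1 hnext a
  have hcost : ∑ k, g k (τ k) ≤ ∑ k, g k (τ' k) := by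
    refine Finset.sum_le_sum fun k _ => hgmono k ?_
    by_cases hk : k = n
    · exact hk ▸ hle
    · exact (hne k hk).ge
  have := mul_le_mul_of_nonneg_left hsup hγ0
  simp only [_root_.bellmanT]
  linarith

end Scheduling

/-- **Lemma 1** (monotonicity of the optimal value function w.r.t. AoI states, in
Bellman fixed-point form). If each `g n` is bounded, positive and nondecreasing,
then the Bellman operator has a unique bounded fixed point `V*`, and `V*` is
AoI-antitone. -/
theorem optimal_value_antitone_in_aoi
    (N M hh : ℕ) (hMN : M < N)
    (p : Fin N → Fin M → Fin hh → ℝ)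
    (hp0 : ∀ n m h, 0 ≤ p n m h) (hp1 : ∀ n m h, p n m h ≤ 1)
    (hpmono : ∀ n m, Monotone (p n m))
    (q : Chan N M hh → ℝ) (hq0 : ∀ H, 0 ≤ q H) (hq1 : ∑ H : Chan N M hh, q H = 1)
    (g : Fin N → ℕ+ → ℝ) (hgpos : ∀ n τ, 0 < g n τ) (hgmono : ∀ n, Monotone (g n))
    (hgbdd : ∀ n, ∃ C : ℝ, ∀ τ, g n τ ≤ C)
    (γ : ℝ) (hγ0 : 0 < γ) (hγ1 : γ < 1) :
    ∃ Vstar : MDPState N M hh → ℝ,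
      (∃ C : ℝ, ∀ s, |Vstar s| ≤ C) ∧
      bellmanT p q g γ Vstar = Vstar ∧
      (∀ W : MDPState N M hh → ℝ,
        (∃ C : ℝ, ∀ s, |W s| ≤ C) → bellmanT p q g γ W = W → W = Vstar) ∧
      AoIAntitone Vstar := by
  choose G hG using hgbdd
  obtain ⟨V, hbdd, hfix, huniq, hlim⟩ := exists_unique_bounded_fixedPoint (bellmanT p q g γ)
    hγ0.le hγ1 (abs_bellmanT_zero_le hgpos hG hMN γ) fun V W C h s =>
      abs_le'.2 ⟨bellmanT_sub_le hMN hp0 hp1 hq0 hq1 g hγ0.le h s, by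
        rw [neg_sub]
        exact bellmanT_sub_le hMN hp0 hp1 hq0 hq1 g hγ0.le
          (fun s => (abs_sub_comm _ _).trans_le (h s)) s⟩
  have hiter : ∀ k, AoIAntitone ((bellmanT p q g γ)^[k] 0) := by
    intro k
    induction k with
    | zero => exact fun _ _ _ _ _ _ => le_rfl
    | succ k ih =>
      rw [Function.iterate_succ_apply']
      exact ih.bellmanT hMN hp0 hp1 hq0 hq1 hgmono hγ0.le
  exact ⟨V, hbdd, hfix, huniq, fun n H τ τ' hne hle =>
    le_of_tendsto_of_tendsto' (hlim _) (hlim _) fun k => hiter k n H τ τ' hne hle⟩
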